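/- arXiv:2109.06697 — 3 statements merged into one kernel-verified Lean document; each statement's English description precedes it below -/
import Mathlib

section
/- Convergence of the Lyapunov value to zero (Lemma 1, stability of the certificate value): Let V : E → ℝ be differentiable with 0 ≤ V y for all y ∈ E, let λ > 0, and suppose the CLBF decrease condition for V, λ, and the policy π holds on E. Then along every closed-loop trajectory x : ℝ → E, the function t ↦ V (x t) tends to 0 as t → ∞. -/
open Filter

section ScalarDecay

open Set

variable {v v' : ℝ → ℝ}

theorem le_mul_exp_of_hasDerivWithinAt_right_le_mul {K a b : ℝ}
    (hv : ContinuousOn v (Icc a b))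
    (hv' : ∀ t ∈ Ico a b, HasDerivWithinAt v (v' t) (Ici t) t)
    (hle : ∀ t ∈ Ico a b, v' t ≤ K * v t) :
    ∀ t ∈ Icc a b, v t ≤ v a * Real.exp (K * (t - a)) := by
  intro t ht
  rw [← gronwallBound_ε0]
  exact le_gronwallBound_of_liminf_deriv_right_le hv
    (fun s hs _ hr => (hv' s hs).liminf_right_slope_le hr) le_rfl
    (fun s hs => (hle s hs).trans_eq (add_zero _).symm) t ht

theorem tendsto_mul_exp_neg_mul_sub_atTop_nhds_zero {lam : ℝ} (hlam : 0 < lam) (C a : ℝ) :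
    Tendsto (fun t => C * Real.exp (-lam * (t - a))) atTop (nhds 0) := by
  have hexponent : Tendsto (fun t => -lam * (t - a)) atTop atBot :=
    (tendsto_atTop_add_const_right atTop (-a) tendsto_id).const_mul_atTop_of_neg
      (neg_neg_of_pos hlam)
  simpa only [Function.comp_apply, mul_zero] using
    (Real.tendsto_exp_atBot.comp hexponent).const_mul C

theorem tendsto_zero_of_hasDerivWithinAt_le_neg_mul {lam a : ℝ} (hlam : 0 < lam)
    (hv_nonneg : ∀ t ≥ a, 0 ≤ v t)
    (hv' : ∀ t ≥ a, HasDerivWithinAt v (v' t) (Ici a) t)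
    (hle : ∀ t ≥ a, v' t ≤ -lam * v t) :
    Tendsto v atTop (nhds 0) := by
  have hcont : ContinuousOn v (Ici a) := fun t ht => (hv' t ht).continuousWithinAt
  have hdecay : ∀ t ≥ a, v t ≤ v a * Real.exp (-lam * (t - a)) := fun t ht =>
    le_mul_exp_of_hasDerivWithinAt_right_le_mul (hcont.mono Icc_subset_Ici_self)
      (fun s hs => (hv' s hs.1).mono (Ici_subset_Ici.2 hs.1)) (fun s hs => hle s hs.1)
      t (right_mem_Icc.2 ht)
  exact squeeze_zero' ((eventually_ge_atTop a).mono hv_nonneg)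
    ((eventually_ge_atTop a).mono hdecay)
    (tendsto_mul_exp_neg_mul_sub_atTop_nhds_zero hlam (v a) a)

end ScalarDecay

theorem clbf_value_tendsto_zero_general {E : Type*} [NormedAddCommGroup E] [NormedSpace ℝ E]
    {F : E → E} {V : E → ℝ} {S : Set E} {lam a : ℝ} {x : ℝ → E}
    (hV : ∀ y ∈ S, DifferentiableAt ℝ V y) (hV_nonneg : ∀ y ∈ S, 0 ≤ V y) (hlam : 0 < lam)
    (hdec : ∀ y ∈ S, fderiv ℝ V y (F y) + lam * V y ≤ 0)
    (hxS : ∀ t ≥ a, x t ∈ S)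
    (hx : ∀ t ≥ a, HasDerivWithinAt x (F (x t)) (Set.Ici a) t) :
    Tendsto (fun t => V (x t)) atTop (nhds 0) := by
  have hVx : ∀ t ≥ a,
      HasDerivWithinAt (fun s => V (x s)) (fderiv ℝ V (x t) (F (x t))) (Set.Ici a) t :=
    fun t ht => (hV (x t) (hxS t ht)).hasFDerivAt.comp_hasDerivWithinAt t (hx t ht)
  have hle : ∀ t ≥ a, fderiv ℝ V (x t) (F (x t)) ≤ -lam * V (x t) := fun t ht => by
    linarith [hdec (x t) (hxS t ht)]
  exact tendsto_zero_of_hasDerivWithinAt_le_neg_mul hlam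
    (fun t ht => hV_nonneg (x t) (hxS t ht)) hVx hle

theorem clbf_value_tendsto_zero {n ℓ : ℕ}
    (f : EuclideanSpace ℝ (Fin n) → EuclideanSpace ℝ (Fin n))
    (g : EuclideanSpace ℝ (Fin n) →
      (EuclideanSpace ℝ (Fin ℓ) →L[ℝ] EuclideanSpace ℝ (Fin n)))
    (π : EuclideanSpace ℝ (Fin n) → EuclideanSpace ℝ (Fin ℓ))
    (V : EuclideanSpace ℝ (Fin n) → ℝ) (hV : Differentiable ℝ V)
    (hVpos : ∀ y, 0 ≤ V y)
    (lam : ℝ) (hlam : 0 < lam)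
    (hdec : ∀ y, (fderiv ℝ V y) (f y + g y (π y)) + lam * V y ≤ 0)
    (x : ℝ → EuclideanSpace ℝ (Fin n))
    (hx : ∀ t ≥ (0 : ℝ), HasDerivAt x (f (x t) + g (x t) (π (x t))) t) :
    Tendsto (fun t => V (x t)) atTop (nhds 0) :=
  clbf_value_tendsto_zero_general (F := fun y => f y + g y (π y)) (S := Set.univ)
    (fun y _ => hV y) (fun y _ => hVpos y) hlam (fun y _ => hdec y)
    (fun t _ => Set.mem_univ (x t)) (fun t ht => (hx t ht).hasDerivWithinAt)
end

section
/- Scenario reduction for the robust CLBF constraint (core of the proof of Theorem 2): Fix y ∈ E, u ∈ U, a function V : E → ℝ differentiable at y, and λ > 0. Let the dynamics be affine in the parameter θ as in the parametric model, and let θ₀, …, θ_m ∈ EuclideanSpace ℝ (Fin r) be finitely many scenarios. If for every i ∈ Fin (m+1), (fderiv ℝ V y) (f_{θ_i} y + g_{θ_i} y u) + λ * V y ≤ 0, then for every θ in the convex hull of {θ₀, …, θ_m}, (fderiv ℝ V y) (f_θ y + g_θ y u) + λ * V y ≤ 0. -/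
/-!
At a fixed state and a fixed input, the closed-loop velocity is an affine function of the parameter,
hence so is the left-hand side of the decrease condition. The parameters satisfying that condition
therefore form a half-space (or everything, or nothing), and a convex set containing the scenarios
contains their convex hull.
-/

theorem affineMap_le_of_mem_convexHull {𝕜 P β : Type*} [Field 𝕜] [LinearOrder 𝕜]
    [IsStrictOrderedRing 𝕜] [AddCommGroup P] [Module 𝕜 P] [AddCommGroup β] [PartialOrder β]
    [IsOrderedAddMonoid β] [Module 𝕜 β] [PosSMulMono 𝕜 β] (A : P →ᵃ[𝕜] β) {S : Set P} {c : β}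
    (hS : ∀ x ∈ S, A x ≤ c) {x : P} (hx : x ∈ convexHull 𝕜 S) : A x ≤ c :=
  convexHull_min hS ((convex_Iic c).affine_preimage A) hx

/-- The affine parametric family `θ ↦ v₀ + ∑ j, θ j • v j`, with nominal value `v₀` and one
direction `v j` per coordinate of the parameter. It models the drift (values in the state space)
and the control matrix (values in continuous linear maps) at a fixed state. -/
noncomputable def affineFamily {ι M : Type*} [Fintype ι] [AddCommGroup M] [Module ℝ M]
    (v₀ : M) (v : ι → M) : EuclideanSpace ℝ ι →ᵃ[ℝ] M :=
  AffineMap.const ℝ (EuclideanSpace ℝ ι) v₀ +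
    (Fintype.linearCombination ℝ v ∘ₗ (WithLp.linearEquiv 2 ℝ (ι → ℝ)).toLinearMap).toAffineMap

theorem affineFamily_apply {ι M : Type*} [Fintype ι] [AddCommGroup M] [Module ℝ M]
    (v₀ : M) (v : ι → M) (θ : EuclideanSpace ℝ ι) :
    affineFamily v₀ v θ = v₀ + ∑ j, θ j • v j :=
  rfl

section ClosedLoop

variable {P E U : Type*} [AddCommGroup P] [Module ℝ P] [NormedAddCommGroup E] [NormedSpace ℝ E]
  [NormedAddCommGroup U] [NormedSpace ℝ U]

/-- The closed-loop velocity `θ ↦ f θ + g θ u` under the input `u`, as an affine map of the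
parameter. The state is fixed: `f` and `g` are the drift and the control matrix at that state. -/
noncomputable def closedLoopVelocity (f : P →ᵃ[ℝ] E) (g : P →ᵃ[ℝ] (U →L[ℝ] E)) (u : U) :
    P →ᵃ[ℝ] E :=
  f + (ContinuousLinearMap.apply ℝ E u).toLinearMap.toAffineMap.comp g

/-- The left-hand side `θ ↦ V' (f θ + g θ u) + c` of the decrease condition at a fixed state, as an
affine map of the parameter. Here `V'` is the derivative of the Lyapunov function at that state and
`c` is the decay term, `lam * V y` in the applications. -/
noncomputable def decreaseResidual (V' : E →L[ℝ] ℝ) (c : ℝ) (f : P →ᵃ[ℝ] E)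
    (g : P →ᵃ[ℝ] (U →L[ℝ] E)) (u : U) : P →ᵃ[ℝ] ℝ :=
  V'.toLinearMap.toAffineMap.comp (closedLoopVelocity f g u) + AffineMap.const ℝ P c

theorem decreaseResidual_apply (V' : E →L[ℝ] ℝ) (c : ℝ) (f : P →ᵃ[ℝ] E)
    (g : P →ᵃ[ℝ] (U →L[ℝ] E)) (u : U) (θ : P) :
    decreaseResidual V' c f g u θ = V' (f θ + g θ u) + c :=
  rfl

theorem rclbf_scenario_reduction_general (f : E → P →ᵃ[ℝ] E) (g : E → P →ᵃ[ℝ] (U →L[ℝ] E))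
    (y : E) (u : U) (V : E → ℝ) (V' : E →L[ℝ] ℝ) (hV : HasFDerivAt V V' y) (lam : ℝ) (S : Set P)
    (h : ∀ θ ∈ S, V' (f y θ + g y θ u) + lam * V y ≤ 0) :
    ∀ θ ∈ convexHull ℝ S, V' (f y θ + g y θ u) + lam * V y ≤ 0 := by
  simp only [← decreaseResidual_apply] at h ⊢
  exact fun θ hθ ↦ affineMap_le_of_mem_convexHull _ h hθ

end ClosedLoop

theorem rclbf_scenario_reduction {n ℓ r m : ℕ}
    (f₀ : EuclideanSpace ℝ (Fin n) → EuclideanSpace ℝ (Fin n))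
    (fP : Fin r → EuclideanSpace ℝ (Fin n) → EuclideanSpace ℝ (Fin n))
    (g₀ : EuclideanSpace ℝ (Fin n) →
      (EuclideanSpace ℝ (Fin ℓ) →L[ℝ] EuclideanSpace ℝ (Fin n)))
    (gP : Fin r → EuclideanSpace ℝ (Fin n) →
      (EuclideanSpace ℝ (Fin ℓ) →L[ℝ] EuclideanSpace ℝ (Fin n)))
    (y : EuclideanSpace ℝ (Fin n)) (u : EuclideanSpace ℝ (Fin ℓ))
    (V : EuclideanSpace ℝ (Fin n) → ℝ) (hV : DifferentiableAt ℝ V y)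
    (lam : ℝ) (hlam : 0 < lam)
    (θs : Fin (m + 1) → EuclideanSpace ℝ (Fin r))
    (h : ∀ i : Fin (m + 1),
      (fderiv ℝ V y) ((f₀ y + ∑ j, θs i j • fP j y) +
        (g₀ y + ∑ j, θs i j • gP j y) u) + lam * V y ≤ 0) :
    ∀ θ ∈ convexHull ℝ (Set.range θs),
      (fderiv ℝ V y) ((f₀ y + ∑ j, θ j • fP j y) +
        (g₀ y + ∑ j, θ j • gP j y) u) + lam * V y ≤ 0 := by
  simp only [← affineFamily_apply] at h ⊢
  exact rclbf_scenario_reduction_general (fun x ↦ affineFamily (f₀ x) (fP · x))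
    (fun x ↦ affineFamily (g₀ x) (gP · x)) y u V _ hV.hasFDerivAt lam _ (Set.forall_mem_range.2 h)
end

section
/- Exponential stabilization under quadratic Lyapunov bounds (quantitative form of Lemma 1): Let V : E → ℝ be differentiable, x_goal ∈ E, λ > 0, and α₁, α₂ > 0 with α₁ * ‖y - x_goal‖^2 ≤ V y ≤ α₂ * ‖y - x_goal‖^2 for all y ∈ E. Suppose the CLBF decrease condition for V, λ, and the policy π holds on E. Then every closed-loop trajectory x : ℝ → E satisfies ‖x t - x_goal‖ ≤ Real.sqrt (α₂ / α₁) * ‖x 0 - x_goal‖ * Real.exp (-(λ / 2) * t) for all t ≥ 0. -/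
/-!
Along a trajectory, the derivative of `V ∘ x` is at most `-lam * (V ∘ x)`, so the Grönwall
inequality gives `V (x t) ≤ V (x t₀) * exp (-lam * (t - t₀))`. Sandwiching `V` between multiples of
the squared distance to the goal and taking square roots halves the rate and produces the constant
`√(α₂ / α₁)`.
-/

open Set

theorem le_mul_exp_of_deriv_right_le_mul {u u' : ℝ → ℝ} {K a b : ℝ}
    (hu : ContinuousOn u (Icc a b))
    (hu' : ∀ t ∈ Ico a b, HasDerivWithinAt u (u' t) (Ici t) t)
    (hle : ∀ t ∈ Ico a b, u' t ≤ K * u t) :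
    ∀ t ∈ Icc a b, u t ≤ u a * Real.exp (K * (t - a)) := by
  intro t ht
  rw [← gronwallBound_ε0]
  exact le_gronwallBound_of_liminf_deriv_right_le hu
    (fun s hs _ hr => (hu' s hs).liminf_right_slope_le hr) le_rfl
    (fun s hs => (hle s hs).trans_eq (add_zero _).symm) t ht

theorem le_sqrt_mul_exp_half_of_mul_sq_le {α₁ α₂ r₀ r μ : ℝ} (hα₁ : 0 < α₁) (hr₀ : 0 ≤ r₀)
    (h : α₁ * r ^ 2 ≤ α₂ * r₀ ^ 2 * Real.exp μ) :
    r ≤ √(α₂ / α₁) * r₀ * Real.exp (μ / 2) := by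
  have hexp : Real.exp μ = Real.exp (μ / 2) ^ 2 := by
    rw [← Real.exp_nat_mul, Nat.cast_ofNat, mul_div_cancel₀ μ two_ne_zero]
  have hsq : r ^ 2 ≤ α₂ / α₁ * (r₀ * Real.exp (μ / 2)) ^ 2 := by
    rw [div_mul_eq_mul_div, le_div_iff₀' hα₁, mul_pow, ← hexp, ← mul_assoc]
    exact h
  calc r ≤ √(α₂ / α₁ * (r₀ * Real.exp (μ / 2)) ^ 2) := Real.le_sqrt_of_sq_le hsq
    _ = √(α₂ / α₁) * r₀ * Real.exp (μ / 2) := by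
      rw [Real.sqrt_mul' _ (sq_nonneg _), Real.sqrt_sq (by positivity), mul_assoc]

section IntegralCurve

variable {E : Type*} [NormedAddCommGroup E] [NormedSpace ℝ E]
  {F : ℝ → E → E} {V : E → ℝ} {x : ℝ → E} {lam : ℝ}

theorem lyapunov_le_mul_exp_of_isIntegralCurveOn {a b : ℝ}
    (hx : IsIntegralCurveOn x F (Icc a b))
    (hV : ∀ t ∈ Icc a b, DifferentiableAt ℝ V (x t))
    (hdec : ∀ t ∈ Ico a b, fderiv ℝ V (x t) (F t (x t)) + lam * V (x t) ≤ 0) :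
    ∀ t ∈ Icc a b, V (x t) ≤ V (x a) * Real.exp (-lam * (t - a)) := by
  have hderiv : ∀ t ∈ Icc a b, HasDerivWithinAt (fun s => V (x s))
      (fderiv ℝ V (x t) (F t (x t))) (Icc a b) t := fun t ht =>
    (hV t ht).hasFDerivAt.comp_hasDerivWithinAt t (hx t ht)
  refine le_mul_exp_of_deriv_right_le_mul (fun t ht => (hderiv t ht).continuousWithinAt)
    (fun t ht => (hderiv t (Ico_subset_Icc_self ht)).mono_of_mem_nhdsWithin
      (Icc_mem_nhdsGE_of_mem ht)) ?_
  intro t ht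
  linarith [hdec t ht]

theorem clbf_exponential_stabilization_general {s : Set E} {x_goal : E} {α₁ α₂ t₀ : ℝ}
    (hV : ∀ y ∈ s, DifferentiableAt ℝ V y) (hα₁ : 0 < α₁)
    (hbound : ∀ y ∈ s, α₁ * ‖y - x_goal‖ ^ 2 ≤ V y ∧ V y ≤ α₂ * ‖y - x_goal‖ ^ 2)
    (hdec : ∀ t ≥ t₀, ∀ y ∈ s, fderiv ℝ V y (F t y) + lam * V y ≤ 0)
    (hx : IsIntegralCurveOn x F (Ici t₀)) (hxs : ∀ t ≥ t₀, x t ∈ s) :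
    ∀ t ≥ t₀, ‖x t - x_goal‖ ≤
      √(α₂ / α₁) * ‖x t₀ - x_goal‖ * Real.exp (-(lam / 2) * (t - t₀)) := by
  intro t ht
  have hdecay : V (x t) ≤ V (x t₀) * Real.exp (-lam * (t - t₀)) :=
    lyapunov_le_mul_exp_of_isIntegralCurveOn (hx.mono Icc_subset_Ici_self)
      (fun τ hτ => hV _ (hxs τ hτ.1)) (fun τ hτ => hdec τ hτ.1 _ (hxs τ hτ.1)) t ⟨ht, le_rfl⟩
  have hsq : α₁ * ‖x t - x_goal‖ ^ 2 ≤
      α₂ * ‖x t₀ - x_goal‖ ^ 2 * Real.exp (-lam * (t - t₀)) :=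
    calc α₁ * ‖x t - x_goal‖ ^ 2 ≤ V (x t) := (hbound _ (hxs t ht)).1
      _ ≤ V (x t₀) * Real.exp (-lam * (t - t₀)) := hdecay
      _ ≤ α₂ * ‖x t₀ - x_goal‖ ^ 2 * Real.exp (-lam * (t - t₀)) := by
        gcongr
        exact (hbound _ (hxs t₀ le_rfl)).2
  have hrate : -(lam / 2) * (t - t₀) = -lam * (t - t₀) / 2 := by ring
  rw [hrate]
  exact le_sqrt_mul_exp_half_of_mul_sq_le hα₁ (norm_nonneg _) hsq

end IntegralCurve

theorem clbf_exponential_stabilization {n ℓ : ℕ}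
    (f : EuclideanSpace ℝ (Fin n) → EuclideanSpace ℝ (Fin n))
    (g : EuclideanSpace ℝ (Fin n) →
      (EuclideanSpace ℝ (Fin ℓ) →L[ℝ] EuclideanSpace ℝ (Fin n)))
    (π : EuclideanSpace ℝ (Fin n) → EuclideanSpace ℝ (Fin ℓ))
    (V : EuclideanSpace ℝ (Fin n) → ℝ) (hV : Differentiable ℝ V)
    (x_goal : EuclideanSpace ℝ (Fin n))
    (lam α₁ α₂ : ℝ) (hlam : 0 < lam) (hα₁ : 0 < α₁) (hα₂ : 0 < α₂)
    (hbound : ∀ y, α₁ * ‖y - x_goal‖ ^ 2 ≤ V y ∧ V y ≤ α₂ * ‖y - x_goal‖ ^ 2)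
    (hdec : ∀ y, (fderiv ℝ V y) (f y + g y (π y)) + lam * V y ≤ 0)
    (x : ℝ → EuclideanSpace ℝ (Fin n))
    (hx : ∀ t ≥ (0 : ℝ), HasDerivAt x (f (x t) + g (x t) (π (x t))) t) :
    ∀ t ≥ (0 : ℝ), ‖x t - x_goal‖ ≤
      Real.sqrt (α₂ / α₁) * ‖x 0 - x_goal‖ * Real.exp (-(lam / 2) * t) := by
  simpa only [sub_zero] using clbf_exponential_stabilization_general (s := univ)
    (F := fun _ y => f y + g y (π y)) (fun y _ => hV y) hα₁ (fun y _ => hbound y)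
    (fun _ _ y _ => hdec y) (fun t ht => (hx t ht).hasDerivWithinAt) (fun _ _ => mem_univ _)
end
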